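/- Let (X, Y) be jointly Gaussian real random variables with means μ₁, μ₂, variances σ₁² , σ₂² > 0 and covariance λ. Then the conditional distribution of X given Y = z is normal with mean μ₁ + (z − μ₂)λ/σ₂² and variance σ₁² − λ²/σ₂². -/

import Mathlib

open MeasureTheory ProbabilityTheory Real

/-- `(X, Y)` is a bivariate Gaussian vector with means `μ₁, μ₂`, variances `σ₁², σ₂²`
and covariance `λ`: every linear combination is Gaussian with the induced parameters. -/
def IsBivariateGaussian {Ω : Type*} [MeasurableSpace Ω] (P : Measure Ω)
    (X Y : Ω → ℝ) (μ₁ μ₂ v₁ v₂ lam : ℝ) : Prop :=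
  ∀ a b : ℝ, Measure.map (fun ω => a * X ω + b * Y ω) P =
    gaussianReal (a * μ₁ + b * μ₂)
      (Real.toNNReal (a ^ 2 * v₁ + 2 * a * b * lam + b ^ 2 * v₂))


theorem bivariate_gaussian_condDistrib
    {Ω : Type*} [MeasurableSpace Ω] [StandardBorelSpace Ω] [Nonempty Ω]
    (P : Measure Ω) [IsProbabilityMeasure P]
    (X Y : Ω → ℝ) (hXm : Measurable X) (hYm : Measurable Y)
    (μ₁ μ₂ σ₁ σ₂ lam : ℝ) (hσ₁ : 0 < σ₁) (hσ₂ : 0 < σ₂)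
    (hXY : IsBivariateGaussian P X Y μ₁ μ₂ (σ₁ ^ 2) (σ₂ ^ 2) lam) :
    ∀ᵐ ω ∂P, (condDistrib X Y P) (Y ω) =
      gaussianReal (μ₁ + (Y ω - μ₂) * lam / σ₂ ^ 2)
        (Real.toNNReal (σ₁ ^ 2 - lam ^ 2 / σ₂ ^ 2)) := by
  -- joint Gaussianity in the Mathlib sense
  have hG : HasGaussianLaw (fun ω => (X ω, Y ω)) P := by
    refine ⟨isGaussian_of_map_eq_gaussianReal fun L => ?_⟩
    refine ⟨_, _, Eq.trans ?_ (hXY (L (1, 0)) (L (0, 1)))⟩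
    · rw [Measure.map_map (by fun_prop) (by fun_prop)]
      congr 1
      ext ω
      have h : ((X ω, Y ω) : ℝ × ℝ) = X ω • ((1, 0) : ℝ × ℝ) + Y ω • ((0, 1) : ℝ × ℝ) := by
        ext <;> simp
      simp only [Function.comp_apply]
      rw [h, map_add, map_smul, map_smul, smul_eq_mul, smul_eq_mul]
      ring
  have hX2 : MemLp X 2 P := hG.fst.memLp_two
  have hY2 : MemLp Y 2 P := hG.snd.memLp_two
  -- variances of linear combinations
  have hvar : ∀ a b : ℝ, a ^ 2 * Var[X; P] + 2 * a * b * cov[X, Y; P] + b ^ 2 * Var[Y; P] =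
      max (a ^ 2 * σ₁ ^ 2 + 2 * a * b * lam + b ^ 2 * σ₂ ^ 2) 0 := by
    intro a b
    have h1 : Var[fun ω => a * X ω + b * Y ω; P] =
        max (a ^ 2 * σ₁ ^ 2 + 2 * a * b * lam + b ^ 2 * σ₂ ^ 2) 0 := by
      have := variance_map (μ := P) (X := id) (Y := fun ω => a * X ω + b * Y ω)
        (by fun_prop) (by fun_prop)
      rw [hXY a b, variance_id_gaussianReal] at this
      rw [Real.coe_toNNReal'] at this
      exact this.symm
    rw [← h1, variance_fun_add (hX2.const_mul a) (hY2.const_mul b), variance_const_mul,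
      variance_const_mul, covariance_const_mul_left, covariance_const_mul_right]
    ring
  have hVX : Var[X; P] = σ₁ ^ 2 := by
    have := hvar 1 0
    rw [max_eq_left (by nlinarith [sq_nonneg σ₁])] at this
    linarith
  have hVY : Var[Y; P] = σ₂ ^ 2 := by
    have := hvar 0 1
    rw [max_eq_left (by nlinarith [sq_nonneg σ₂])] at this
    linarith
  have hcov : cov[X, Y; P] = lam := by
    rcases le_total 0 lam with h | h
    · have := hvar 1 1
      rw [max_eq_left (by nlinarith [sq_nonneg σ₁, sq_nonneg σ₂]), hVX, hVY] at this
      linarith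
    · have := hvar 1 (-1)
      rw [max_eq_left (by nlinarith [sq_nonneg σ₁, sq_nonneg σ₂]), hVX, hVY] at this
      linarith
  obtain ⟨c, hc⟩ : ∃ c, c = lam / σ₂ ^ 2 := ⟨_, rfl⟩
  have hcs : c * σ₂ ^ 2 = lam := by rw [hc]; field_simp
  let Z : Ω → ℝ := fun ω => X ω - c * Y ω
  have hZm : Measurable Z := by fun_prop
  have hZY : HasGaussianLaw (fun ω => (Z ω, Y ω)) P := by
    let L : ℝ × ℝ →L[ℝ] ℝ × ℝ :=
      (ContinuousLinearMap.fst ℝ ℝ ℝ - c • ContinuousLinearMap.snd ℝ ℝ ℝ).prod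
        (ContinuousLinearMap.snd ℝ ℝ ℝ)
    exact hG.map_fun L
  have hcovZ : cov[Z, Y; P] = 0 := by
    rw [covariance_fun_sub_left hX2 (hY2.const_mul c) hY2, covariance_const_mul_left,
      covariance_self hYm.aemeasurable, hcov, hVY, hcs, sub_self]
  have hind : IndepFun Y Z P := (hZY.indepFun_of_covariance_eq_zero hcovZ).symm
  have hZlaw : P.map Z = gaussianReal (μ₁ - c * μ₂) (σ₁ ^ 2 - lam ^ 2 / σ₂ ^ 2).toNNReal := by
    have h := hXY 1 (-c)
    have e1 : (fun ω => 1 * X ω + -c * Y ω) = Z := by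
      ext ω; simp only [Z]; ring
    have e2 : 1 ^ 2 * σ₁ ^ 2 + 2 * 1 * -c * lam + (-c) ^ 2 * σ₂ ^ 2
        = σ₁ ^ 2 - lam ^ 2 / σ₂ ^ 2 := by
      rw [hc]; field_simp; ring
    rw [e1, e2] at h
    rw [h]; congr 1; ring
  let κ : Kernel ℝ ℝ :=
    { toFun := fun y => gaussianReal (μ₁ + (y - μ₂) * lam / σ₂ ^ 2)
        (σ₁ ^ 2 - lam ^ 2 / σ₂ ^ 2).toNNReal
      measurable' := measurable_gaussianReal.comp
        (f := fun y : ℝ => (μ₁ + (y - μ₂) * lam / σ₂ ^ 2,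
          (σ₁ ^ 2 - lam ^ 2 / σ₂ ^ 2).toNNReal)) (by fun_prop) }
  have hκ : ∀ y, κ y = (P.map Z).map (fun z => z + c * y) := by
    intro y
    rw [hZlaw, gaussianReal_map_add_const]
    change gaussianReal _ _ = _
    congr 1
    rw [hc]; ring
  have : IsMarkovKernel κ := ⟨fun y => by
    change IsProbabilityMeasure (gaussianReal _ _); infer_instance⟩
  have hmain : P.map (fun ω => (Y ω, X ω)) = P.map Y ⊗ₘ κ := by
    have hprod := (indepFun_iff_map_prod_eq_prod_map_map hYm.aemeasurable hZm.aemeasurable).1 hind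
    have : IsProbabilityMeasure (P.map Z) := Measure.isProbabilityMeasure_map hZm.aemeasurable
    have : IsProbabilityMeasure (P.map Y) := Measure.isProbabilityMeasure_map hYm.aemeasurable
    have hf : Measurable (fun p : ℝ × ℝ => (p.1, p.2 + c * p.1)) := by fun_prop
    have e : (fun ω => (Y ω, X ω)) =
        (fun p : ℝ × ℝ => (p.1, p.2 + c * p.1)) ∘ (fun ω => (Y ω, Z ω)) := by
      ext ω <;> simp [Z]
    rw [e, ← Measure.map_map hf (by fun_prop), hprod]
    ext s hs
    rw [Measure.map_apply hf hs, Measure.prod_apply (hf hs), Measure.compProd_apply hs]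
    refine lintegral_congr fun y => ?_
    rw [hκ, Measure.map_apply (by fun_prop) (measurable_prodMk_left hs)]
    rfl
  have := condDistrib_ae_eq_of_measure_eq_compProd Y hXm.aemeasurable hmain
  exact ae_of_ae_map hYm.aemeasurable this
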